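/- The triangle group T(2,3,7) has a torsion-free normal subgroup N of index exactly 168 such that the quotient T(2,3,7)/N is a simple group (of order 168). -/

import Mathlib

/-- Relator set of the triangle group `T(a,b,c)`: the relators `x^a`, `y^b`, `z^c`
and `x·y·z` in the free group on three generators `x, y, z`. -/
def TriangleRels (a b c : ℕ) : Set (FreeGroup (Fin 3)) :=
  {FreeGroup.of 0 ^ a, FreeGroup.of 1 ^ b, FreeGroup.of 2 ^ c,
    FreeGroup.of 0 * FreeGroup.of 1 * FreeGroup.of 2}

/-- The triangle group `T(a,b,c)`. -/
abbrev TriangleGroup (a b c : ℕ) : Type :=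
  PresentedGroup (TriangleRels a b c)

namespace CoxeterMatrix

open Real

variable {B : Type*} (M : CoxeterMatrix B)

lemma sin_pi_div_pos {i j : B} (hij : i ≠ j) (hM : M i j ≠ 0) : 0 < sin (π / M i j) := by
  have h1 : M i j ≠ 1 := M.off_diagonal i j hij
  have h2 : (1 : ℝ) < M i j := by exact_mod_cast (show 1 < M i j by omega)
  exact sin_pos_of_pos_of_lt_pi (by positivity) (div_lt_self pi_pos h2)

variable [DecidableEq B]

/-- The simple root indexed by `i`, a standard basis vector of `B → ℝ`. -/
def simpleRoot (i : B) : B → ℝ := Pi.single i 1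

lemma simpleRoot_nonneg (i : B) : 0 ≤ simpleRoot i :=
  Pi.single_nonneg.2 zero_le_one

/-- The vectors at angle `x θ` from `αᵢ` in the plane of `αᵢ` and `αⱼ`, where `θ = π / M i j`. -/
noncomputable def dihedralRoot (i j : B) (x : ℝ) : B → ℝ :=
  (sin ((x + 1) * (π / M i j)) / sin (π / M i j)) • simpleRoot i +
    (sin (x * (π / M i j)) / sin (π / M i j)) • simpleRoot j

lemma dihedralRoot_add_two_mul {i j : B} (hM : M i j ≠ 0) (x : ℝ) :
    M.dihedralRoot i j (x + 2 * M i j) = M.dihedralRoot i j x := by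
  have h : (M i j : ℝ) ≠ 0 := by exact_mod_cast hM
  have period (y : ℝ) : sin ((y + 2 * M i j) * (π / M i j)) = sin (y * (π / M i j)) := by
    rw [← sin_add_two_pi (y * _)]
    congr 1
    field_simp
  simp only [dihedralRoot, add_right_comm x _ 1, period]

lemma dihedralRoot_zero {i j : B} (hij : i ≠ j) (hM : M i j ≠ 0) :
    M.dihedralRoot i j 0 = simpleRoot i := by
  simp [dihedralRoot, (M.sin_pi_div_pos hij hM).ne']

lemma dihedralRoot_neg_one {i j : B} (hij : i ≠ j) (hM : M i j ≠ 0) :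
    M.dihedralRoot i j (-1) = -simpleRoot j := by
  simp [dihedralRoot, (M.sin_pi_div_pos hij hM).ne']

variable [Fintype B]

/-- The canonical bilinear form, with Gram matrix `-cos (π / M i j)` on the simple roots. -/
noncomputable def canonicalForm : LinearMap.BilinForm ℝ (B → ℝ) :=
  Matrix.toBilin' (Matrix.of fun i j ↦ -cos (π / M i j))

/-- The coroot of `simpleRoot i`, the functional `2 B(αᵢ, ·)`. -/
noncomputable def simpleCoroot (i : B) : Module.Dual ℝ (B → ℝ) :=
  (2 : ℝ) • M.canonicalForm (simpleRoot i)

lemma canonicalForm_simpleRoot (i j : B) :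
    M.canonicalForm (simpleRoot i) (simpleRoot j) = -cos (π / M i j) := by
  simp [canonicalForm, simpleRoot, Matrix.toBilin'_single]

lemma canonicalForm_simpleRoot_self (i : B) :
    M.canonicalForm (simpleRoot i) (simpleRoot i) = 1 := by
  simp [canonicalForm_simpleRoot]

lemma canonicalForm_symm (u v : B → ℝ) :
    M.canonicalForm u v = M.canonicalForm v u := by
  simp only [canonicalForm, Matrix.toBilin'_apply, Matrix.of_apply]
  rw [Finset.sum_comm]
  refine Finset.sum_congr rfl fun i _ ↦ Finset.sum_congr rfl fun j _ ↦ ?_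
  rw [M.symmetric i j]
  ring

lemma simpleCoroot_simpleRoot_self (i : B) : M.simpleCoroot i (simpleRoot i) = 2 := by
  simp [simpleCoroot, canonicalForm_simpleRoot_self]

/-- The orthogonal reflection in the simple root indexed by `i`. -/
noncomputable def simpleReflection (i : B) : (B → ℝ) ≃ₗ[ℝ] (B → ℝ) :=
  Module.reflection (M.simpleCoroot_simpleRoot_self i)

lemma simpleReflection_apply (i : B) (v : B → ℝ) :
    M.simpleReflection i v = v - (2 * M.canonicalForm (simpleRoot i) v) • simpleRoot i := by
  simp [simpleReflection, Module.reflection_apply, simpleCoroot]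

lemma simpleReflection_simpleRoot_self (i : B) :
    M.simpleReflection i (simpleRoot i) = -simpleRoot i :=
  Module.reflection_apply_self _

lemma simpleReflection_simpleReflection (i : B) (v : B → ℝ) :
    M.simpleReflection i (M.simpleReflection i v) = v :=
  Module.involutive_reflection _ v

lemma simpleReflection_apply_of_ne {i j : B} (h : j ≠ i) (v : B → ℝ) :
    M.simpleReflection i v j = v j := by
  simp [simpleReflection_apply, simpleRoot, h]

lemma canonicalForm_simpleReflection (i : B) (v : B → ℝ) :
    M.canonicalForm (M.simpleReflection i v) (M.simpleReflection i v) = M.canonicalForm v v := by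
  rw [simpleReflection_apply]
  simp only [map_sub, map_smul, LinearMap.sub_apply, LinearMap.smul_apply, smul_eq_mul,
    canonicalForm_simpleRoot_self, M.canonicalForm_symm v (simpleRoot i)]
  ring

lemma simpleReflection_dihedralRoot (i j : B) (x : ℝ) :
    M.simpleReflection j (M.dihedralRoot i j x) = M.dihedralRoot j i (x + 1) := by
  simp only [dihedralRoot, map_add, map_smul, simpleReflection_simpleRoot_self]
  rw [simpleReflection_apply, canonicalForm_simpleRoot, M.symmetric j i]
  set θ := π / (M i j : ℝ)
  have key : sin ((x + 1 + 1) * θ) = 2 * cos θ * sin ((x + 1) * θ) - sin (x * θ) := by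
    rw [show (x + 1 + 1) * θ = (x + 1) * θ + θ by ring,
      show x * θ = (x + 1) * θ - θ by ring, sin_add, sin_sub]
    ring
  rw [key]
  module

lemma simpleReflection_mul_pow_dihedralRoot (i j : B) (x : ℝ) (n : ℕ) :
    ((M.simpleReflection i * M.simpleReflection j) ^ n) (M.dihedralRoot i j x) =
      M.dihedralRoot i j (x + 2 * n) := by
  induction n with
  | zero => simp
  | succ n ih =>
    rw [pow_succ', LinearEquiv.mul_apply, ih, LinearEquiv.mul_apply,
      simpleReflection_dihedralRoot, simpleReflection_dihedralRoot]
    congr 1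
    push_cast
    ring

lemma isLiftable_simpleReflection (hM : ∀ i j, M i j ≠ 0) :
    M.IsLiftable M.simpleReflection := by
  intro i j
  rcases eq_or_ne i j with rfl | hij
  · ext1 v
    simp [simpleReflection_simpleReflection]
  set f := (M.simpleReflection i * M.simpleReflection j) ^ M i j with hf
  have hroot (x : ℝ) : f (M.dihedralRoot i j x) = M.dihedralRoot i j x := by
    rw [hf, simpleReflection_mul_pow_dihedralRoot, dihedralRoot_add_two_mul _ (hM i j)]
  have hi : f (simpleRoot i) = simpleRoot i := by
    simpa only [M.dihedralRoot_zero hij (hM i j)] using hroot 0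
  have hj : f (simpleRoot j) = simpleRoot j := by
    simpa only [M.dihedralRoot_neg_one hij (hM i j), map_neg, neg_inj] using hroot (-1)
  have hsin := M.sin_pi_div_pos hij (hM i j)
  ext1 v
  set c := cos (π / M i j) with hc
  set a := M.canonicalForm (simpleRoot i) v with ha
  set b := M.canonicalForm (simpleRoot j) v with hb
  have hd : 1 - c ^ 2 ≠ 0 := by
    have := sin_sq_add_cos_sq (π / (M i j : ℝ))
    have h2 : 1 - c ^ 2 = sin (π / M i j) ^ 2 := by rw [hc]; linarith
    rw [h2]
    positivity
  set p := (a + c * b) / (1 - c ^ 2) with hp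
  set q := (b + c * a) / (1 - c ^ 2) with hq
  -- `u` is the component of `v` orthogonal to both simple roots
  set u := v - p • simpleRoot i - q • simpleRoot j with hu
  have hui : M.canonicalForm (simpleRoot i) u = 0 := by
    simp only [hu, map_sub, map_smul, smul_eq_mul, canonicalForm_simpleRoot_self,
      canonicalForm_simpleRoot, ← ha, ← hc, hp, hq]
    field_simp
    ring
  have huj : M.canonicalForm (simpleRoot j) u = 0 := by
    simp only [hu, map_sub, map_smul, smul_eq_mul, canonicalForm_simpleRoot_self,
      canonicalForm_simpleRoot, M.symmetric j i, ← hb, ← hc, hp, hq]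
    field_simp
    ring
  have hstep : (M.simpleReflection i * M.simpleReflection j) u = u := by
    simp [LinearEquiv.mul_apply, simpleReflection_apply, hui, huj]
  have hfu : f u = u := by
    rw [hf]
    generalize M i j = n
    induction n with
    | zero => simp
    | succ n ih => rw [pow_succ, LinearEquiv.mul_apply, hstep, ih]
  have hv : v = u + p • simpleRoot i + q • simpleRoot j := by rw [hu]; module
  rw [hv]
  simp only [map_add, map_smul, hfu, hi, hj, LinearEquiv.coe_one, id]

end CoxeterMatrix

namespace CoxeterSystem

open Real CoxeterMatrix

variable {B : Type*} {M : CoxeterMatrix B} {W : Type*} [Group W] (cs : CoxeterSystem M W)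

lemma exists_eq_mul_alternatingWord (w : W) (i j : B) (hi : ¬cs.IsRightDescent w i) :
    ∃ (v : W) (k : ℕ), w = v * cs.wordProd (alternatingWord i j k) ∧
      cs.length w = cs.length v + k ∧ ¬cs.IsRightDescent v i ∧ ¬cs.IsRightDescent v j := by
  induction hn : cs.length w generalizing w i j with
  | zero => exact ⟨w, 0, by simp [alternatingWord], by simp [hn], hi, fun h ↦ by
      simp [IsRightDescent, hn] at h⟩
  | succ n ih =>
    by_cases hj : cs.IsRightDescent w j
    · have hlen := cs.isRightDescent_iff.1 hj
      obtain ⟨v, k, hw, hk, hvj, hvi⟩ := ih (w * cs.simple j) j i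
        (cs.isRightDescent_iff_not_isRightDescent_mul.1 hj) (by omega)
      refine ⟨v, k + 1, ?_, by omega, hvi, hvj⟩
      rw [alternatingWord_succ, wordProd_concat, ← mul_assoc, ← hw,
        simple_mul_simple_cancel_right]
    · exact ⟨w, 0, by simp [alternatingWord], by simp [hn], hi, hj⟩

variable [Fintype B]

/-- The height functional, equal to `1` on each simple root. -/
noncomputable def height : Module.Dual ℝ (B → ℝ) := ∑ i, LinearMap.proj i

lemma height_apply (v : B → ℝ) : height v = ∑ i, v i := by
  simp [height]

variable [DecidableEq B] (hM : ∀ i j, M i j ≠ 0)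

/-- The geometric representation of a Coxeter group all of whose exponents are finite. -/
noncomputable def geometricRep : W →* ((B → ℝ) ≃ₗ[ℝ] (B → ℝ)) :=
  cs.lift ⟨M.simpleReflection, M.isLiftable_simpleReflection hM⟩

lemma geometricRep_simple (i : B) : cs.geometricRep hM (cs.simple i) = M.simpleReflection i :=
  cs.lift_apply_simple _ i

lemma geometricRep_mul_simple (w : W) (i : B) (v : B → ℝ) :
    cs.geometricRep hM (w * cs.simple i) v = cs.geometricRep hM w (M.simpleReflection i v) := by
  rw [map_mul, geometricRep_simple, LinearEquiv.mul_apply]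

lemma exists_geometricRep_alternatingWord (i j : B) (hij : i ≠ j) (k : ℕ) (x : ℝ) (hx : 0 ≤ x)
    (hk : x + k + 1 ≤ M i j) :
    ∃ a b : ℝ, 0 ≤ a ∧ 0 ≤ b ∧
      cs.geometricRep hM (cs.wordProd (alternatingWord i j k)) (M.dihedralRoot i j x) =
        a • simpleRoot i + b • simpleRoot j := by
  induction k generalizing i j x with
  | zero =>
    have hsin := M.sin_pi_div_pos hij (hM i j)
    have hm : (0 : ℝ) < M i j := by exact_mod_cast Nat.pos_of_ne_zero (hM i j)
    have hnonneg (y : ℝ) (hy : 0 ≤ y) (hy' : y ≤ M i j) :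
        0 ≤ sin (y * (π / M i j)) / sin (π / M i j) := by
      refine div_nonneg (sin_nonneg_of_nonneg_of_le_pi (by positivity) ?_) hsin.le
      calc y * (π / M i j) ≤ M i j * (π / M i j) := by gcongr
        _ = π := by field_simp
    push_cast at hk
    exact ⟨_, _, hnonneg (x + 1) (by linarith) (by linarith), hnonneg x hx (by linarith),
      by simp [alternatingWord, dihedralRoot]⟩
  | succ k ih =>
    obtain ⟨a, b, ha, hb, h⟩ := ih j i hij.symm (x + 1) (by linarith) (by
      rw [M.symmetric j i]; push_cast at hk; linarith)
    refine ⟨b, a, hb, ha, ?_⟩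
    rw [alternatingWord_succ, wordProd_concat, geometricRep_mul_simple,
      simpleReflection_dihedralRoot, h, add_comm]

/-- If `ℓ(w sᵢ) > ℓ(w)` then `w αᵢ` is a nonnegative combination of simple roots. -/
theorem geometricRep_simpleRoot_nonneg (w : W) (i : B) (hi : ¬cs.IsRightDescent w i) :
    0 ≤ cs.geometricRep hM w (simpleRoot i) := by
  induction hn : cs.length w using Nat.strong_induction_on generalizing w i with
  | _ n ih =>
    subst hn
    rcases eq_or_ne w 1 with rfl | hw
    · simpa using simpleRoot_nonneg i
    obtain ⟨j, hj⟩ := cs.exists_rightDescent_of_ne_one hw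
    have hij : i ≠ j := by rintro rfl; exact hi hj
    obtain ⟨v, k, hwv, hlen, hvi, hvj⟩ := cs.exists_eq_mul_alternatingWord w i j hi
    have hk0 : k ≠ 0 := by
      rintro rfl
      rw [alternatingWord, wordProd_nil, mul_one] at hwv
      exact hvj (hwv ▸ hj)
    have hkM : k + 1 ≤ M i j := by
      by_contra! hlt
      refine cs.not_isReduced_alternatingWord j i (hM j i) (m := k + 1)
        (by rw [M.symmetric j i]; exact hlt) ?_
      have h1 : w * cs.simple i = v * cs.wordProd (alternatingWord j i (k + 1)) := by
        rw [alternatingWord_succ, wordProd_concat, ← mul_assoc, ← hwv]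
      have h2 := cs.not_isRightDescent_iff.1 hi
      have h3 := cs.length_mul_le v (cs.wordProd (alternatingWord j i (k + 1)))
      have h4 := cs.length_wordProd_le (alternatingWord j i (k + 1))
      rw [IsReduced]
      rw [← h1] at h3
      rw [length_alternatingWord] at h4 ⊢
      omega
    obtain ⟨a, b, ha, hb, hab⟩ := cs.exists_geometricRep_alternatingWord hM i j hij k 0 le_rfl
      (by rw [zero_add]; exact_mod_cast hkM)
    rw [dihedralRoot_zero _ hij (hM i j)] at hab
    rw [hwv, map_mul, LinearEquiv.mul_apply, hab, map_add, map_smul, map_smul]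
    exact add_nonneg (smul_nonneg ha (ih _ (by omega) v i hvi rfl))
      (smul_nonneg hb (ih _ (by omega) v j hvj rfl))

lemma geometricRep_simpleRoot_nonpos (w : W) (i : B) (hi : cs.IsRightDescent w i) :
    cs.geometricRep hM w (simpleRoot i) ≤ 0 := by
  have := cs.geometricRep_simpleRoot_nonneg hM (w * cs.simple i) i
    (cs.isRightDescent_iff_not_isRightDescent_mul.1 hi)
  rwa [geometricRep_mul_simple, simpleReflection_simpleRoot_self, map_neg,
    Left.nonneg_neg_iff] at this

/-- The positive roots: nonnegative vectors in the orbits of the simple roots. -/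
def positiveRoots : Set (B → ℝ) :=
  {β | (∃ w i, β = cs.geometricRep hM w (simpleRoot i)) ∧ 0 ≤ β}

lemma simpleRoot_mem_positiveRoots (i : B) : simpleRoot i ∈ cs.positiveRoots hM :=
  ⟨⟨1, i, by simp⟩, simpleRoot_nonneg i⟩

lemma canonicalForm_geometricRep (w : W) (v : B → ℝ) :
    M.canonicalForm (cs.geometricRep hM w v) (cs.geometricRep hM w v) = M.canonicalForm v v := by
  induction w using cs.simple_induction_right generalizing v with
  | one => simp
  | mul_simple_right w i ih =>
    rw [geometricRep_mul_simple, ih, canonicalForm_simpleReflection]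

lemma canonicalForm_self_of_mem_positiveRoots {β : B → ℝ} (hβ : β ∈ cs.positiveRoots hM) :
    M.canonicalForm β β = 1 := by
  obtain ⟨⟨w, i, rfl⟩, -⟩ := hβ
  rw [canonicalForm_geometricRep, canonicalForm_simpleRoot_self]

lemma simpleReflection_mem_positiveRoots {β : B → ℝ} (hβ : β ∈ cs.positiveRoots hM) {i : B}
    (hi : β ≠ simpleRoot i) : M.simpleReflection i β ∈ cs.positiveRoots hM := by
  have hself := cs.canonicalForm_self_of_mem_positiveRoots hM hβ
  obtain ⟨⟨w, k, hw⟩, hpos⟩ := hβ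
  have hroot : M.simpleReflection i β = cs.geometricRep hM (cs.simple i * w) (simpleRoot k) := by
    rw [map_mul, geometricRep_simple, LinearEquiv.mul_apply, ← hw]
  refine ⟨⟨_, k, hroot⟩, ?_⟩
  by_cases hd : cs.IsRightDescent (cs.simple i * w) k
  · have hneg := cs.geometricRep_simpleRoot_nonpos hM _ k hd
    rw [← hroot] at hneg
    have hβi : β = β i • simpleRoot i := by
      ext j
      rcases eq_or_ne j i with rfl | hj
      · simp [simpleRoot]
      · have h := hneg j
        rw [simpleReflection_apply_of_ne _ hj] at h
        simpa [simpleRoot, hj] using le_antisymm h (hpos j)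
    rw [hβi] at hself
    simp only [map_smul, LinearMap.smul_apply, canonicalForm_simpleRoot_self, smul_eq_mul,
      mul_one] at hself
    have h1 : β i = 1 := by
      have := hpos i
      simp only [Pi.zero_apply] at this
      nlinarith
    rw [h1, one_smul] at hβi
    exact absurd hβi hi
  · rw [hroot]
    exact cs.geometricRep_simpleRoot_nonneg hM _ k hd

/-- The positive roots on which a functional is negative. -/
def negativeRoots (q : Module.Dual ℝ (B → ℝ)) : Set (B → ℝ) :=
  {β ∈ cs.positiveRoots hM | q β < 0}

lemma simpleReflection_mem_negativeRoots {q : Module.Dual ℝ (B → ℝ)} {i : B} {β : B → ℝ}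
    (hβ : β ∈ cs.negativeRoots hM (q ∘ₗ (M.simpleReflection i).toLinearMap))
    (hi : β ≠ simpleRoot i) : M.simpleReflection i β ∈ cs.negativeRoots hM q :=
  ⟨cs.simpleReflection_mem_positiveRoots hM hβ.1 hi, hβ.2⟩

lemma finite_negativeRoots_comp_simpleReflection {q : Module.Dual ℝ (B → ℝ)}
    (hq : (cs.negativeRoots hM q).Finite) (i : B) :
    (cs.negativeRoots hM (q ∘ₗ (M.simpleReflection i).toLinearMap)).Finite := by
  refine ((hq.image (M.simpleReflection i)).insert (simpleRoot i)).subset fun β hβ ↦ ?_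
  rcases eq_or_ne β (simpleRoot i) with h | h
  · exact Or.inl h
  · exact Or.inr ⟨_, cs.simpleReflection_mem_negativeRoots hM hβ h,
      M.simpleReflection_simpleReflection i β⟩

lemma finite_negativeRoots_comp_geometricRep {q : Module.Dual ℝ (B → ℝ)}
    (hq : (cs.negativeRoots hM q).Finite) (w : W) :
    (cs.negativeRoots hM (q ∘ₗ (cs.geometricRep hM w).toLinearMap)).Finite := by
  induction w using cs.simple_induction_right with
  | one => simpa using hq
  | mul_simple_right w i ih =>
    convert cs.finite_negativeRoots_comp_simpleReflection hM ih i using 2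
    refine LinearMap.ext fun v ↦ ?_
    simp [geometricRep_simple]

lemma finite_negativeRoots_sum {ι : Type*} (t : Finset ι) (q : ι → Module.Dual ℝ (B → ℝ))
    (hq : ∀ k ∈ t, (cs.negativeRoots hM (q k)).Finite) :
    (cs.negativeRoots hM (∑ k ∈ t, q k)).Finite := by
  refine (t.finite_toSet.biUnion hq).subset fun β ⟨hβ, hneg⟩ ↦ ?_
  by_contra! h
  simp only [Set.mem_iUnion, not_exists, negativeRoots, Set.mem_ofPred_eq, not_and, not_lt] at h
  rw [LinearMap.sum_apply] at hneg
  exact hneg.not_ge (Finset.sum_nonneg fun k hk ↦ h k hk hβ)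

/-- A functional negative on only finitely many positive roots is moved by the group into the
closed fundamental chamber. -/
lemma exists_comp_geometricRep_nonneg {q : Module.Dual ℝ (B → ℝ)}
    (hq : (cs.negativeRoots hM q).Finite) :
    ∃ w, ∀ i, 0 ≤ q (cs.geometricRep hM w (simpleRoot i)) := by
  induction hn : (cs.negativeRoots hM q).ncard using Nat.strong_induction_on generalizing q with
  | _ n ih =>
    by_cases hdom : ∀ i, 0 ≤ q (simpleRoot i)
    · exact ⟨1, by simpa using hdom⟩
    push Not at hdom
    obtain ⟨i, hi⟩ := hdom
    have hne : ∀ β ∈ cs.negativeRoots hM (q ∘ₗ (M.simpleReflection i).toLinearMap),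
        β ≠ simpleRoot i := by
      rintro _ ⟨-, h⟩ rfl
      simp only [LinearMap.comp_apply, LinearEquiv.coe_coe, simpleReflection_simpleRoot_self,
        map_neg] at h
      linarith
    have hcard : (cs.negativeRoots hM (q ∘ₗ (M.simpleReflection i).toLinearMap)).ncard < n := by
      rw [← hn, ← Set.ncard_image_of_injective _ (M.simpleReflection i).injective]
      refine Set.ncard_lt_ncard ⟨?_, fun hsub ↦ ?_⟩ hq
      · rintro _ ⟨β, hβ, rfl⟩
        exact cs.simpleReflection_mem_negativeRoots hM hβ (hne β hβ)
      · obtain ⟨β, hβ, h⟩ := hsub ⟨cs.simpleRoot_mem_positiveRoots hM i, hi⟩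
        have : β = -simpleRoot i := by
          rw [← M.simpleReflection_simpleReflection i β, h, simpleReflection_simpleRoot_self]
        have h2 := hβ.1.2 i
        simp [this, simpleRoot] at h2
        linarith
    obtain ⟨w, hw⟩ := ih _ hcard
      (cs.finite_negativeRoots_comp_simpleReflection hM hq i) rfl
    exact ⟨cs.simple i * w, fun k ↦ by simpa [geometricRep_simple] using hw k⟩

/-- The stabilizer of a point of the closed fundamental chamber is a standard parabolic. -/
lemma mem_closure_of_comp_geometricRep_eq {q : Module.Dual ℝ (B → ℝ)}
    (hq : ∀ i, 0 ≤ q (simpleRoot i)) {w : W}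
    (hw : q ∘ₗ (cs.geometricRep hM w).toLinearMap = q) :
    w ∈ Subgroup.closure (cs.simple '' {i | q (simpleRoot i) = 0}) := by
  induction hn : cs.length w using Nat.strong_induction_on generalizing w with
  | _ n ih =>
    subst hn
    rcases eq_or_ne w 1 with rfl | hw1
    · exact one_mem _
    obtain ⟨i, hi⟩ := cs.exists_rightDescent_of_ne_one hw1
    have hfix (v : B → ℝ) : q (cs.geometricRep hM w v) = q v := LinearMap.congr_fun hw v
    have hqnonneg {v : B → ℝ} (hv : 0 ≤ v) : 0 ≤ q v := by
      rw [pi_eq_sum_univ' v, map_sum]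
      refine Finset.sum_nonneg fun k _ ↦ ?_
      rw [map_smul]
      refine smul_nonneg (hv k) ?_
      exact hq k
    have hzero : q (simpleRoot i) = 0 := by
      refine le_antisymm ?_ (hq i)
      have := hqnonneg (neg_nonneg.2 (cs.geometricRep_simpleRoot_nonpos hM w i hi))
      rw [map_neg, hfix] at this
      linarith
    have hws : w * cs.simple i ∈ Subgroup.closure (cs.simple '' {i | q (simpleRoot i) = 0}) := by
      refine ih _ hi ?_ rfl
      refine LinearMap.ext fun v ↦ ?_
      simp [geometricRep_simple, hfix, simpleReflection_apply, hzero]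
    rw [← cs.simple_mul_simple_cancel_right (w := w) i]
    exact mul_mem hws (Subgroup.subset_closure ⟨i, hzero, rfl⟩)

lemma negativeRoots_height : cs.negativeRoots hM height = ∅ := by
  ext β
  simp only [negativeRoots, Set.mem_ofPred_eq, Set.mem_empty_iff_false, iff_false, not_and, not_lt,
    height_apply]
  exact fun hβ ↦ Finset.sum_nonneg fun i _ ↦ hβ.2 i

lemma infinite_positiveRoots [Nonempty B]
    (hind : ∀ v : B → ℝ, 0 ≤ v → (∀ i, 0 ≤ M.canonicalForm (simpleRoot i) v) → v = 0) :
    (cs.positiveRoots hM).Infinite := by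
  intro hfin
  obtain ⟨β, hβ, hmax⟩ := Set.exists_max_image _ height hfin
    ⟨_, cs.simpleRoot_mem_positiveRoots hM (Classical.arbitrary B)⟩
  have hβ0 : β = 0 := hind β hβ.2 fun i ↦ by
    rcases eq_or_ne β (simpleRoot i) with rfl | h
    · simp [canonicalForm_simpleRoot_self]
    · have := hmax _ (cs.simpleReflection_mem_positiveRoots hM hβ h)
      rw [simpleReflection_apply, map_sub, map_smul, height_apply (simpleRoot i)] at this
      simp [simpleRoot] at this
      simpa [simpleRoot] using this
  have := cs.canonicalForm_self_of_mem_positiveRoots hM hβ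
  simp [hβ0] at this

/-- In a Coxeter group of indefinite type, every element of finite order is conjugate into a
proper standard parabolic subgroup. -/
theorem exists_conj_mem_closure_of_isOfFinOrder [Nonempty B] (hM : ∀ i j, M i j ≠ 0)
    (hind : ∀ v : B → ℝ, 0 ≤ v → (∀ i, 0 ≤ M.canonicalForm (simpleRoot i) v) → v = 0)
    {g : W} (hg : IsOfFinOrder g) :
    ∃ (w : W) (i : B), w⁻¹ * g * w ∈ Subgroup.closure (cs.simple '' {j | j ≠ i}) := by
  let q (k : ℕ) : Module.Dual ℝ (B → ℝ) := height ∘ₗ (cs.geometricRep hM (g ^ k)).toLinearMap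
  have hq (k : ℕ) : (cs.negativeRoots hM (q k)).Finite :=
    cs.finite_negativeRoots_comp_geometricRep hM (by simp [negativeRoots_height]) _
  obtain ⟨n, hn⟩ := Nat.exists_eq_succ_of_ne_zero hg.orderOf_pos.ne'
  have hgn : g ^ (n + 1) = 1 := by rw [← Nat.succ_eq_add_one, ← hn, pow_orderOf_eq_one]
  -- the sum of the orbit of the height functional
  let p := ∑ k ∈ Finset.range (n + 1), q k
  have hpg : p ∘ₗ (cs.geometricRep hM g).toLinearMap = p := by
    refine LinearMap.ext fun v ↦ ?_
    have hstep (k : ℕ) : q k (cs.geometricRep hM g v) = q (k + 1) v := by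
      simp [q, pow_succ]
    simp only [p, LinearMap.comp_apply, LinearMap.sum_apply, LinearEquiv.coe_coe, hstep]
    rw [Finset.sum_range_succ, Finset.sum_range_succ' (fun k ↦ q k v)]
    simp only [q, hgn, pow_zero]
  have hp : p ≠ 0 := by
    intro hp
    refine cs.infinite_positiveRoots hM hind ?_
    refine (cs.finite_negativeRoots_sum hM (Finset.range n) (fun k ↦ q (k + 1))
      fun k _ ↦ hq _).subset fun β hβ ↦ ⟨hβ, ?_⟩
    have h1 : (∑ k ∈ Finset.range n, q (k + 1)) β + q 0 β = 0 := by
      rw [← LinearMap.add_apply, ← Finset.sum_range_succ']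
      exact LinearMap.congr_fun hp β
    have h2 : 0 < q 0 β := by
      have hβ0 : β ≠ 0 := by
        rintro rfl
        simpa using cs.canonicalForm_self_of_mem_positiveRoots hM hβ
      simp only [q, pow_zero, map_one, LinearMap.comp_apply, LinearEquiv.coe_coe,
        LinearEquiv.coe_one, id, height_apply]
      exact Fintype.sum_pos (lt_of_le_of_ne hβ.2 hβ0.symm)
    linarith
  obtain ⟨w, hw⟩ := cs.exists_comp_geometricRep_nonneg hM
    (cs.finite_negativeRoots_sum hM (Finset.range (n + 1)) q fun k _ ↦ hq k)
  set p' := p ∘ₗ (cs.geometricRep hM w).toLinearMap with hp'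
  have hmem : w⁻¹ * g * w ∈ Subgroup.closure (cs.simple '' {i | p' (simpleRoot i) = 0}) := by
    refine cs.mem_closure_of_comp_geometricRep_eq hM hw ?_
    refine LinearMap.ext fun v ↦ ?_
    have := LinearMap.congr_fun hpg (cs.geometricRep hM w v)
    simpa [hp', ← LinearEquiv.mul_apply, ← map_mul, mul_assoc] using this
  obtain ⟨i, hi⟩ : ∃ i, p' (simpleRoot i) ≠ 0 := by
    by_contra! h
    refine hp ?_
    have hp0 : p' = 0 := LinearMap.pi_ext' fun i ↦ by
      ext
      simpa [simpleRoot] using h i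
    refine LinearMap.ext fun v ↦ ?_
    have := LinearMap.congr_fun hp0 ((cs.geometricRep hM w).symm v)
    simpa [hp'] using this
  refine ⟨w, i, Subgroup.closure_mono (Set.image_mono fun j hj ↦ ?_) hmem⟩
  rintro rfl
  exact hi hj

end CoxeterSystem

lemma Subgroup.exists_zpow_of_mem_closure_pair {G : Type*} [Group G] {a b : G} (ha : a * a = 1)
    (hb : b * b = 1) {g : G} (hg : g ∈ Subgroup.closure {a, b}) :
    ∃ r : ℤ, g = (a * b) ^ r ∨ g = (a * b) ^ r * a := by
  have hmul (x : G) (hx : ∃ r : ℤ, x = (a * b) ^ r ∨ x = (a * b) ^ r * a) (y : G)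
      (hy : y ∈ ({a, b} : Set G)) : ∃ r : ℤ, x * y = (a * b) ^ r ∨ x * y = (a * b) ^ r * a := by
    obtain ⟨r, rfl | rfl⟩ := hx <;> obtain rfl | rfl := hy
    · exact ⟨r, Or.inr rfl⟩
    · refine ⟨r - 1, Or.inr ?_⟩
      rw [zpow_sub_one, mul_inv_rev, inv_eq_of_mul_eq_one_left ha, inv_eq_of_mul_eq_one_left hb]
      simp [mul_assoc, ha]
    · exact ⟨r, Or.inl (by rw [mul_assoc, ha, mul_one])⟩
    · exact ⟨r + 1, Or.inl (by rw [zpow_add_one, mul_assoc])⟩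
  induction hg using Subgroup.closure_induction_right with
  | one => exact ⟨0, by simp⟩
  | mul_right x _ y hy ih => exact hmul x ih y hy
  | mul_inv_cancel x _ y hy ih =>
    have : y⁻¹ = y := by
      obtain rfl | rfl := hy
      exacts [inv_eq_of_mul_eq_one_left ha, inv_eq_of_mul_eq_one_left hb]
    rw [this]
    exact hmul x ih y hy

/-- A homomorphism from a rank three Coxeter group of indefinite type that preserves the orders of
the rotations at the vertices has no even element of finite order in its kernel. -/
theorem CoxeterSystem.eq_one_of_isOfFinOrder_of_map_eq_one {M : CoxeterMatrix (Fin 3)}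
    {W H : Type*} [Group W] [Group H] (cs : CoxeterSystem M W) (hM : ∀ i j, M i j ≠ 0)
    (hind : ∀ v : Fin 3 → ℝ, 0 ≤ v →
      (∀ i, 0 ≤ M.canonicalForm (CoxeterMatrix.simpleRoot i) v) → v = 0)
    (f : W →* H) (hf : ∀ i, orderOf (f (cs.simple i * cs.simple (i + 1))) = M i (i + 1))
    {g : W} (hg : IsOfFinOrder g) (heven : cs.lengthParity g = 1) (hfg : f g = 1) : g = 1 := by
  obtain ⟨w, i, hmem⟩ := cs.exists_conj_mem_closure_of_isOfFinOrder hM hind hg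
  have hsub : cs.simple '' {j | j ≠ i} ⊆ {cs.simple (i + 1), cs.simple (i + 1 + 1)} := by
    rintro _ ⟨j, hj, rfl⟩
    have : ∀ i j : Fin 3, j ≠ i → j = i + 1 ∨ j = i + 1 + 1 := by decide
    obtain rfl | rfl := this i j hj <;> simp
  have hpar : cs.lengthParity (w⁻¹ * g * w) = 1 := by simp [heven]
  have hker : f (w⁻¹ * g * w) = 1 := by simp [hfg]
  have hone : w⁻¹ * g * w = 1 := by
    obtain ⟨r, hr | hr⟩ := Subgroup.exists_zpow_of_mem_closure_pair
      (cs.simple_mul_simple_self _) (cs.simple_mul_simple_self _) (Subgroup.closure_mono hsub hmem)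
    · rw [hr, map_zpow, ← orderOf_dvd_iff_zpow_eq_one, hf] at hker
      obtain ⟨d, rfl⟩ := hker
      rw [hr, zpow_mul, zpow_natCast, simple_mul_simple_pow, one_zpow]
    · exfalso
      rw [hr] at hpar
      simp only [map_mul, map_zpow, lengthParity_simple, ← ofAdd_add] at hpar
      revert hpar
      rw [show (1 + 1 : ZMod 2) = 0 from rfl, ofAdd_zero, one_zpow, one_mul]
      decide
  have : g = w * (w⁻¹ * g * w) * w⁻¹ := by group
  rw [this, hone, mul_one, mul_inv_cancel]

lemma TriangleRels.lift_eq_one {G : Type*} [Group G] {a b c : ℕ} {f : Fin 3 → G}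
    (h0 : f 0 ^ a = 1) (h1 : f 1 ^ b = 1) (h2 : f 2 ^ c = 1) (h : f 0 * f 1 * f 2 = 1) :
    ∀ r ∈ TriangleRels a b c, FreeGroup.lift f r = 1 := by
  rintro r (rfl | rfl | rfl | rfl) <;> simpa

namespace TriangleGroup

open PresentedGroup

section Relations

variable {a b c : ℕ}

lemma of_zero_pow : (of 0 : TriangleGroup a b c) ^ a = 1 :=
  one_of_mem (x := FreeGroup.of 0 ^ a) (by simp [TriangleRels])

lemma of_one_pow : (of 1 : TriangleGroup a b c) ^ b = 1 :=
  one_of_mem (x := FreeGroup.of 1 ^ b) (by simp [TriangleRels])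

lemma of_two_pow : (of 2 : TriangleGroup a b c) ^ c = 1 :=
  one_of_mem (x := FreeGroup.of 2 ^ c) (by simp [TriangleRels])

lemma of_mul_of_mul_of : (of 0 * of 1 * of 2 : TriangleGroup a b c) = 1 :=
  one_of_mem (x := FreeGroup.of 0 * FreeGroup.of 1 * FreeGroup.of 2) (by simp [TriangleRels])

lemma of_two_eq : (of 2 : TriangleGroup a b c) = (of 1)⁻¹ * (of 0)⁻¹ := by
  rw [← mul_inv_rev]
  exact eq_inv_of_mul_eq_one_right of_mul_of_mul_of

lemma of_one_mul_of_zero_pow : (of 1 * of 0 : TriangleGroup a b c) ^ c = 1 := by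
  have h : (of 1 * of 0 : TriangleGroup a b c) = (of 0)⁻¹ * (of 2)⁻¹ * (of 0)⁻¹⁻¹ := by
    rw [of_two_eq]
    group
  rw [h, conj_pow, inv_pow, of_two_pow]
  simp

/-- The endomorphism of a triangle group induced by the reflection in the side joining the fixed
points of the first two generators. -/
def reflectionHom (a b c : ℕ) : TriangleGroup a b c →* TriangleGroup a b c :=
  toGroup (f := ![(of 0)⁻¹, (of 1)⁻¹, of 1 * of 0]) <| TriangleRels.lift_eq_one
    (by simp [of_zero_pow]) (by simp [of_one_pow]) (by simp [of_one_mul_of_zero_pow])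
    (by simp [mul_assoc])

lemma reflectionHom_of (i : Fin 3) :
    reflectionHom a b c (of i) = (![(of 0)⁻¹, (of 1)⁻¹, of 1 * of 0] : Fin 3 → _) i :=
  toGroup.of _

lemma reflectionHom_reflectionHom (g : TriangleGroup a b c) :
    reflectionHom a b c (reflectionHom a b c g) = g := by
  suffices h : (reflectionHom a b c).comp (reflectionHom a b c) = MonoidHom.id _ from
    DFunLike.congr_fun h g
  ext i
  fin_cases i <;> simp [reflectionHom_of, of_two_eq]

/-- The reflection of a triangle group as a permutation. -/
def reflectionPerm (a b c : ℕ) : Equiv.Perm (TriangleGroup a b c) :=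
  Function.Involutive.toPerm _ reflectionHom_reflectionHom

lemma reflectionPerm_apply (g : TriangleGroup a b c) :
    reflectionPerm a b c g = reflectionHom a b c g :=
  rfl

end Relations

/-- The Coxeter matrix of the full triangle group `Δ(2,3,7)`. -/
def coxeterMatrix : CoxeterMatrix (Fin 3) where
  M := !![1, 2, 7; 2, 1, 3; 7, 3, 1]
  isSymm := by ext i j; fin_cases i <;> fin_cases j <;> rfl
  diagonal := by decide
  off_diagonal := by intro i j h; fin_cases i <;> fin_cases j <;> simp_all

lemma isLiftable_coxeterMatrix {G : Type*} [Group G] {f : Fin 3 → G} (hsq : ∀ i, f i * f i = 1)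
    (hrot : ∀ i, (f i * f (i + 1)) ^ coxeterMatrix i (i + 1) = 1) :
    coxeterMatrix.IsLiftable f := by
  have hinv (i : Fin 3) : (f i)⁻¹ = f i := inv_eq_of_mul_eq_one_left (hsq i)
  intro i j
  have : ∀ i j : Fin 3, j = i ∨ j = i + 1 ∨ i = j + 1 := by decide
  obtain rfl | rfl | rfl := this i j
  · rw [hsq, one_pow]
  · exact hrot i
  · rw [coxeterMatrix.symmetric, ← inv_inj, ← inv_pow, mul_inv_rev, hinv, hinv, hrot, inv_one]

/-- The Coxeter system of the full triangle group `Δ(2,3,7)`. -/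
abbrev coxeterSystem : CoxeterSystem coxeterMatrix coxeterMatrix.Group :=
  coxeterMatrix.toCoxeterSystem

/-- The homomorphism sending the generators to the products of adjacent reflections. -/
def toCoxeterGroup : TriangleGroup 2 3 7 →* coxeterMatrix.Group :=
  toGroup (f := fun i ↦ coxeterSystem.simple i * coxeterSystem.simple (i + 1)) <|
    TriangleRels.lift_eq_one (coxeterSystem.simple_mul_simple_pow 0 1)
      (coxeterSystem.simple_mul_simple_pow 1 2) (coxeterSystem.simple_mul_simple_pow 2 0)
      (by simp [-CoxeterMatrix.toCoxeterSystem_simple, mul_assoc])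

lemma toCoxeterGroup_of (i : Fin 3) :
    toCoxeterGroup (of i) = coxeterSystem.simple i * coxeterSystem.simple (i + 1) :=
  toGroup.of _

/-- The permutations of `T(2,3,7)` by which the simple reflections of the full triangle group act:
compositions of a left translation and the reflection. -/
def reflectionAction : Fin 3 → Equiv.Perm (TriangleGroup 2 3 7) :=
  ![MulAction.toPerm (of 0 : TriangleGroup 2 3 7) * reflectionPerm 2 3 7, reflectionPerm 2 3 7,
    reflectionPerm 2 3 7 * MulAction.toPerm (of 1 : TriangleGroup 2 3 7)]

lemma reflectionAction_mul_self (i : Fin 3) : reflectionAction i * reflectionAction i = 1 := by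
  ext1 g
  fin_cases i <;>
    simp [reflectionAction, reflectionPerm_apply, reflectionHom_of, reflectionHom_reflectionHom]

lemma reflectionAction_mul_succ (i : Fin 3) :
    reflectionAction i * reflectionAction (i + 1) =
      MulAction.toPermHom (TriangleGroup 2 3 7) _ (of i) := by
  ext1 g
  fin_cases i <;>
    simp [reflectionAction, reflectionPerm_apply, reflectionHom_of, reflectionHom_reflectionHom,
      of_two_eq, mul_assoc]

lemma isLiftable_reflectionAction : coxeterMatrix.IsLiftable reflectionAction := by
  refine isLiftable_coxeterMatrix reflectionAction_mul_self fun i ↦ ?_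
  rw [reflectionAction_mul_succ, ← map_pow]
  refine (congrArg _ ?_).trans (map_one _)
  fin_cases i
  exacts [of_zero_pow, of_one_pow, of_two_pow]

lemma toCoxeterGroup_injective : Function.Injective toCoxeterGroup := by
  let act := coxeterSystem.lift ⟨_, isLiftable_reflectionAction⟩
  have h : act.comp toCoxeterGroup = MulAction.toPermHom (TriangleGroup 2 3 7) _ := by
    ext1 i
    rw [MonoidHom.comp_apply, toCoxeterGroup_of, map_mul, CoxeterSystem.lift_apply_simple,
      CoxeterSystem.lift_apply_simple, reflectionAction_mul_succ]
  have : Function.Injective (act.comp toCoxeterGroup) := by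
    rw [h]
    exact MulAction.toPerm_injective
  exact Function.Injective.of_comp (f := act) (by simpa using this)

lemma lengthParity_toCoxeterGroup (g : TriangleGroup 2 3 7) :
    coxeterSystem.lengthParity (toCoxeterGroup g) = 1 := by
  suffices h : coxeterSystem.lengthParity.comp toCoxeterGroup = 1 from DFunLike.congr_fun h g
  ext1 i
  simp only [MonoidHom.comp_apply, toCoxeterGroup_of, map_mul, CoxeterSystem.lengthParity_simple]
  rfl

lemma coxeterMatrix_ne_zero (i j : Fin 3) : coxeterMatrix i j ≠ 0 := by
  fin_cases i <;> fin_cases j <;> simp [coxeterMatrix]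

lemma coxeterMatrix_indefinite (v : Fin 3 → ℝ) (hv : 0 ≤ v)
    (h : ∀ i, 0 ≤ coxeterMatrix.canonicalForm (CoxeterMatrix.simpleRoot i) v) : v = 0 := by
  have hc : √3 / 2 < Real.cos (Real.pi / 7) := by
    rw [← Real.cos_pi_div_six]
    exact Real.cos_lt_cos_of_nonneg_of_le_pi (by positivity) (by linarith [Real.pi_pos])
      (by linarith [Real.pi_pos])
  have hc2 : 3 / 4 < Real.cos (Real.pi / 7) ^ 2 := by
    have h3 : √3 ^ 2 = 3 := Real.sq_sqrt (by norm_num)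
    nlinarith [Real.sqrt_nonneg 3]
  have h0 := h 0
  have h1 := h 1
  have h2 := h 2
  simp [CoxeterMatrix.canonicalForm, Matrix.toBilin'_apply, CoxeterMatrix.simpleRoot,
    Fin.sum_univ_three, coxeterMatrix] at h0 h1 h2
  have v0 : 0 ≤ v 0 := hv 0
  have v1 : 0 ≤ v 1 := hv 1
  have v2 : 0 ≤ v 2 := hv 2
  set c := Real.cos (Real.pi / 7)
  have hc0 : 0 < c := lt_trans (by positivity) hc
  have hv2 : v 2 = 0 := by nlinarith
  have hv0 : v 0 = 0 := by nlinarith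
  have hv1 : v 1 = 0 := by nlinarith
  ext i
  fin_cases i <;> assumption

end TriangleGroup

open scoped MatrixGroups

namespace Matrix

lemma SpecialLinearGroup.monoidHom_range_toGL {n R : Type*} [Fintype n] [DecidableEq n]
    [CommRing R] : (SpecialLinearGroup.toGL (n := n) (R := R)).range = GeneralLinearGroup.det.ker :=
  SetLike.coe_injective range_toGL

lemma SpecialLinearGroup.card_mul_card_units {n R : Type*} [Fintype n] [DecidableEq n] [Nonempty n]
    [CommRing R] : Nat.card (SpecialLinearGroup n R) * Nat.card Rˣ = Nat.card (GL n R) := by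
  rw [← Subgroup.card_mul_index (GeneralLinearGroup.det (n := n) (R := R)).ker,
    Subgroup.index_ker, MonoidHom.range_eq_top.mpr GeneralLinearGroup.det_surjective,
    Subgroup.card_top, ← monoidHom_range_toGL]
  congr 1
  exact Nat.card_congr (MonoidHom.ofInjective SpecialLinearGroup.toGL_injective).toEquiv

instance fact_prime_seven : Fact (Nat.Prime 7) := ⟨by norm_num⟩

lemma SpecialLinearGroup.card_two_zmod_seven : Nat.card SL(2, ZMod 7) = 336 := by
  have h := card_mul_card_units (n := Fin 2) (R := ZMod 7)
  rw [card_GL_field, Nat.card_units] at h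
  simp [Fin.prod_univ_two, ← Nat.card_eq_fintype_card] at h
  lia

lemma SpecialLinearGroup.card_center_two_zmod_seven :
    Nat.card (Subgroup.center SL(2, ZMod 7)) = 2 := by
  rw [Nat.card_congr (center_equiv_rootsOfUnity' (0 : Fin 2)).toEquiv]
  have : IsPrimitiveRoot (-1 : ZMod 7) 2 := IsPrimitiveRoot.neg_one 7 (by decide)
  simpa using this.card_rootsOfUnity

lemma ProjectiveSpecialLinearGroup.card_two_zmod_seven : Nat.card PSL(2, ZMod 7) = 168 := by
  have h := Subgroup.card_mul_index (Subgroup.center SL(2, ZMod 7))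
  rw [SpecialLinearGroup.card_center_two_zmod_seven, SpecialLinearGroup.card_two_zmod_seven,
    Subgroup.index] at h
  change Nat.card (SL(2, ZMod 7) ⧸ _) = _
  lia

end Matrix

namespace TriangleGroup

open PresentedGroup Matrix

/-- The matrices over `𝔽₇` representing the generators of `T(2,3,7)`. -/
def rotationMatrix : Fin 3 → SL(2, ZMod 7) :=
  ![⟨!![0, -1; 1, 0], by decide⟩, ⟨!![0, 1; -1, 1], by decide⟩, ⟨!![1, 1; 0, 1], by decide⟩]

/-- The matrices over `𝔽₇` representing the simple reflections of the full triangle group. -/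
def reflectionMatrix : Fin 3 → GL (Fin 2) (ZMod 7) :=
  ![⟨!![1, 0; 0, -1], !![1, 0; 0, -1], by decide, by decide⟩,
    ⟨!![0, -1; -1, 0], !![0, -1; -1, 0], by decide, by decide⟩,
    ⟨!![1, -1; 0, -1], !![1, -1; 0, -1], by decide, by decide⟩]

lemma reflectionMatrix_mul_self (i : Fin 3) : reflectionMatrix i * reflectionMatrix i = 1 := by
  decide +revert

lemma reflectionMatrix_mul_succ (i : Fin 3) :
    reflectionMatrix i * reflectionMatrix (i + 1) = (rotationMatrix i).toGL := by
  decide +revert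

/-- The elements of `PSL(2,7)` representing the generators of `T(2,3,7)`. -/
def rotation (i : Fin 3) : PSL(2, ZMod 7) := QuotientGroup.mk' _ (rotationMatrix i)

lemma orderOf_rotation (i : Fin 3) : orderOf (rotation i) = coxeterMatrix i (i + 1) := by
  have : Fact (Nat.Prime (coxeterMatrix i (i + 1))) :=
    ⟨by fin_cases i <;> simp [coxeterMatrix] <;> norm_num⟩
  refine orderOf_eq_prime ?_ ?_
  · rw [rotation, ← map_pow, QuotientGroup.mk'_apply, QuotientGroup.eq_one_iff,
      Subgroup.mem_center_iff]
    have h : ∀ i, rotationMatrix i ^ coxeterMatrix i (i + 1) = 1 ∨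
        rotationMatrix i ^ coxeterMatrix i (i + 1) = -1 := by decide
    obtain h | h := h i <;> simp [h]
  · rw [rotation, Ne, QuotientGroup.mk'_apply, QuotientGroup.eq_one_iff, Subgroup.mem_center_iff]
    have h : ∀ i, ∃ j,
        rotationMatrix j * rotationMatrix i ≠ rotationMatrix i * rotationMatrix j := by decide
    exact fun hi ↦ (h i).elim fun j hj ↦ hj (hi _)

/-- The homomorphism `T(2,3,7) → PSL(2,7)`. -/
def toPSL : TriangleGroup 2 3 7 →* PSL(2, ZMod 7) :=
  toGroup (f := rotation) <| TriangleRels.lift_eq_one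
    (orderOf_dvd_iff_pow_eq_one.mp (orderOf_rotation 0).dvd)
    (orderOf_dvd_iff_pow_eq_one.mp (orderOf_rotation 1).dvd)
    (orderOf_dvd_iff_pow_eq_one.mp (orderOf_rotation 2).dvd) <| by
      have : rotationMatrix 0 * rotationMatrix 1 * rotationMatrix 2 = 1 := by decide
      simp only [rotation, ← map_mul, this, map_one]

lemma toPSL_of (i : Fin 3) : toPSL (of i) = rotation i :=
  toGroup.of _

lemma toPSL_surjective : Function.Surjective toPSL := by
  have hmem (i : Fin 3) : QuotientGroup.mk' _ (rotationMatrix i) ∈ toPSL.range := ⟨of i, toPSL_of i⟩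
  have h : toPSL.range.comap (QuotientGroup.mk' (Subgroup.center SL(2, ZMod 7))) = ⊤ := by
    refine (Subgroup.eq_top_iff' _).mpr <| SL2.transvection_induction _ (fun i j hij c ↦ ?_)
      fun _ _ ↦ mul_mem
    have : (∀ c, SpecialLinearGroup.transvection (zero_ne_one : (0 : Fin 2) ≠ 1) (c : ZMod 7) =
          rotationMatrix 2 ^ c.val) ∧
        ∀ c, SpecialLinearGroup.transvection (one_ne_zero : (1 : Fin 2) ≠ 0) (c : ZMod 7) =
          rotationMatrix 0 * rotationMatrix 2 ^ (-c).val * (rotationMatrix 0)⁻¹ := by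
      decide
    fin_cases i <;> fin_cases j
    · exact absurd rfl hij
    · exact this.1 c ▸ pow_mem (hmem 2) _
    · exact this.2 c ▸ mul_mem (mul_mem (hmem 0) (pow_mem (hmem 2) _)) (inv_mem (hmem 0))
    · exact absurd rfl hij
  rintro ⟨A⟩
  exact (h ▸ Subgroup.mem_top A : A ∈ toPSL.range.comap _)

lemma isLiftable_reflectionMatrix :
    coxeterMatrix.IsLiftable fun i ↦ ProjGenLinGroup.mk (reflectionMatrix i) := by
  refine isLiftable_coxeterMatrix (fun i ↦ ?_) fun i ↦ ?_
  · rw [← map_mul, reflectionMatrix_mul_self, map_one]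
  · rw [← map_mul, reflectionMatrix_mul_succ, ← orderOf_rotation]
    exact (map_pow ProjectiveSpecialLinearGroup.toPGL (rotation i) _).symm.trans <| by
      rw [pow_orderOf_eq_one, map_one]

/-- The homomorphism from the full triangle group `Δ(2,3,7)` to `PGL(2,7)`. -/
def coxeterGroupToPGL : coxeterMatrix.Group →* PGL(2, ZMod 7) :=
  coxeterSystem.lift ⟨_, isLiftable_reflectionMatrix⟩

lemma coxeterGroupToPGL_simple_mul_succ (i : Fin 3) :
    coxeterGroupToPGL (coxeterSystem.simple i * coxeterSystem.simple (i + 1)) =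
      ProjectiveSpecialLinearGroup.toPGL (rotation i) := by
  rw [map_mul, coxeterGroupToPGL, CoxeterSystem.lift_apply_simple,
    CoxeterSystem.lift_apply_simple, ← map_mul, reflectionMatrix_mul_succ]
  rfl

lemma coxeterGroupToPGL_toCoxeterGroup (g : TriangleGroup 2 3 7) :
    coxeterGroupToPGL (toCoxeterGroup g) = ProjectiveSpecialLinearGroup.toPGL (toPSL g) := by
  suffices h : coxeterGroupToPGL.comp toCoxeterGroup =
      ProjectiveSpecialLinearGroup.toPGL.comp toPSL from DFunLike.congr_fun h g
  ext1 i
  rw [MonoidHom.comp_apply, MonoidHom.comp_apply, toCoxeterGroup_of, toPSL_of,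
    coxeterGroupToPGL_simple_mul_succ]

lemma eq_one_of_isOfFinOrder_of_toPSL_eq_one {g : TriangleGroup 2 3 7} (hg : IsOfFinOrder g)
    (h : toPSL g = 1) : g = 1 := by
  refine toCoxeterGroup_injective <| (map_one toCoxeterGroup).symm ▸
    coxeterSystem.eq_one_of_isOfFinOrder_of_map_eq_one coxeterMatrix_ne_zero
      coxeterMatrix_indefinite coxeterGroupToPGL (fun i ↦ ?_) (toCoxeterGroup.isOfFinOrder hg)
      (lengthParity_toCoxeterGroup g) (by rw [coxeterGroupToPGL_toCoxeterGroup, h, map_one])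
  rw [coxeterGroupToPGL_simple_mul_succ,
    orderOf_injective _ ProjectiveSpecialLinearGroup.toPGL_injective, orderOf_rotation]

end TriangleGroup

/-- The triangle group `T(2,3,7)` has a torsion-free normal subgroup `N` of
index exactly 168 whose quotient is a simple group (of order 168). -/
theorem triangleGroup_237_normal_torsionFree_index168_simple_quotient :
    ∃ (N : Subgroup (TriangleGroup 2 3 7)) (hN : N.Normal),
      N.index = 168 ∧ (∀ x ∈ N, IsOfFinOrder x → x = 1) ∧
      (letI := hN; IsSimpleGroup (TriangleGroup 2 3 7 ⧸ N)) := by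
  refine ⟨TriangleGroup.toPSL.ker, inferInstance, ?_,
    fun x hx hfin ↦ TriangleGroup.eq_one_of_isOfFinOrder_of_toPSL_eq_one hfin hx, ?_⟩
  · rw [Subgroup.index_ker, MonoidHom.range_eq_top.mpr TriangleGroup.toPSL_surjective,
      Subgroup.card_top, Matrix.ProjectiveSpecialLinearGroup.card_two_zmod_seven]
  · have : IsSimpleGroup PSL(2, ZMod 7) :=
      Matrix.ProjectiveSpecialLinearGroup.rank_two_simple (by simp)
    exact (QuotientGroup.quotientKerEquivOfSurjective _
      TriangleGroup.toPSL_surjective).isSimpleGroup
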